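/- Let D be a semisimple x-monotone drawing of K_n, let k be an integer with 0 ≤ k ≤ (n−3)/2, and let D' be the x-monotone drawing of K_{n−1} obtained from D by deleting v_n and its incident edges. Then the number of (D,D')-invariant ≤k-edges satisfies E_{≤k}(D,D') ≥ Σ_{i=1}^{k+1} (k+2−i) = C(k+2, 2). -/

import Mathlib

/-- `Zval n` is Hill's conjectured value
`Z(n) = (1/4)⌊n/2⌋⌊(n−1)/2⌋⌊(n−2)/2⌋⌊(n−3)/2⌋` for the crossing number of `K n`.
(The product of the four floors is always divisible by 4, so natural division is exact.) -/
def Zval (n : ℕ) : ℕ :=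
  n / 2 * ((n - 1) / 2) * ((n - 2) / 2) * ((n - 3) / 2) / 4

/-- An x-monotone drawing of the complete graph `K n`: vertices `v i = (x i, 0)` with
`x` strictly increasing, and for each pair `i < j` a continuous function `e i j` on
`[x i, x j]` vanishing at the endpoints, whose graph is the arc of the edge `{i, j}`.
Edges avoid the intermediate vertices, any two distinct edges meet in finitely many
interior parameters, and at each such common point the difference changes sign
(a proper crossing). -/
structure XMonotoneDrawing (n : ℕ) where
  x : Fin n → ℝ
  x_strictMono : StrictMono x
  e : Fin n → Fin n → ℝ → ℝ
  cont : ∀ i j : Fin n, i < j → ContinuousOn (e i j) (Set.Icc (x i) (x j))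
  end_left : ∀ i j : Fin n, i < j → e i j (x i) = 0
  end_right : ∀ i j : Fin n, i < j → e i j (x j) = 0
  avoid_vertex : ∀ i m j : Fin n, i < m → m < j → e i j (x m) ≠ 0
  cross_finite : ∀ i j k l : Fin n, i < j → k < l → (i, j) ≠ (k, l) →
    {t : ℝ | max (x i) (x k) < t ∧ t < min (x j) (x l) ∧ e i j t = e k l t}.Finite
  sign_change : ∀ i j k l : Fin n, i < j → k < l → (i, j) ≠ (k, l) →
    ∀ t : ℝ, max (x i) (x k) < t → t < min (x j) (x l) → e i j t = e k l t →
      ∃ ε > (0 : ℝ), ∀ s : ℝ, max (x i) (x k) < s → t - ε < s → s < t →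
        ∀ u : ℝ, u < min (x j) (x l) → t < u → u < t + ε →
          (e i j s - e k l s) * (e i j u - e k l u) < 0

namespace XMonotoneDrawing

variable {n : ℕ}

/-- The set of parameters at which the edges `{i,j}` and `{k,l}` cross
(both edges are parametrized over the `x`-axis). -/
def crossSet (D : XMonotoneDrawing n) (i j k l : Fin n) : Set ℝ :=
  {t : ℝ | max (D.x i) (D.x k) < t ∧ t < min (D.x j) (D.x l) ∧ D.e i j t = D.e k l t}

/-- The number of crossings between the edges `{i,j}` and `{k,l}`. -/
noncomputable def crossCount (D : XMonotoneDrawing n) (i j k l : Fin n) : ℕ :=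
  (D.crossSet i j k l).ncard

/-- Two edges `{i,j}` and `{k,l}` are adjacent if they share an endpoint index. -/
def Adj (i j k l : Fin n) : Prop := i = k ∨ i = l ∨ j = k ∨ j = l

/-- A drawing is semisimple if no two adjacent edges cross. -/
def Semisimple (D : XMonotoneDrawing n) : Prop :=
  ∀ i j k l : Fin n, i < j → k < l → (i, j) ≠ (k, l) → Adj i j k l →
    D.crossCount i j k l = 0

/-- A drawing is weakly semisimple if every two adjacent edges cross an even
number of times. -/
def WeaklySemisimple (D : XMonotoneDrawing n) : Prop :=
  ∀ i j k l : Fin n, i < j → k < l → (i, j) ≠ (k, l) → Adj i j k l →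
    Even (D.crossCount i j k l)

/-- A drawing is simple if no two adjacent edges cross and every two non-adjacent
edges cross at most once. -/
def Simple (D : XMonotoneDrawing n) : Prop :=
  ∀ i j k l : Fin n, i < j → k < l → (i, j) ≠ (k, l) →
    (Adj i j k l → D.crossCount i j k l = 0) ∧
    (¬ Adj i j k l → D.crossCount i j k l ≤ 1)

/-- `cr D`: the total number of crossings of `D`. (Each unordered pair of distinct
edges is counted twice in the sum, whence the division by 2; `crossCount` is
symmetric in the two edges.) -/
noncomputable def cr (D : XMonotoneDrawing n) : ℕ :=
  (∑ p : (Fin n × Fin n) × (Fin n × Fin n),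
      if p.1.1 < p.1.2 ∧ p.2.1 < p.2.2 ∧ p.1 ≠ p.2 then
        D.crossCount p.1.1 p.1.2 p.2.1 p.2.2
      else 0) / 2

/-- `ocr D`: the number of unordered pairs of edges of `D` crossing an odd number
of times. (Each unordered pair appears twice as an ordered pair.) -/
noncomputable def ocr (D : XMonotoneDrawing n) : ℕ :=
  {p : (Fin n × Fin n) × (Fin n × Fin n) |
    p.1.1 < p.1.2 ∧ p.2.1 < p.2.2 ∧ p.1 ≠ p.2 ∧
      Odd (D.crossCount p.1.1 p.1.2 p.2.1 p.2.2)}.ncard / 2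

/-- The signature of the triple `i < j < k`: `true` (i.e. `+`) if the vertex `v j`
lies below the edge `{i, k}`, i.e. `e i k (x j) > 0`, and `false` (i.e. `−`) otherwise. -/
noncomputable def sig (D : XMonotoneDrawing n) (i j k : Fin n) : Bool :=
  if 0 < D.e i k (D.x j) then true else false

/-- `D` realizes the signature function `σ` if `σ_D` and `σ` agree on all
increasing triples. -/
def Realizes (D : XMonotoneDrawing n) (σ : Fin n → Fin n → Fin n → Bool) : Prop :=
  ∀ i j k : Fin n, i < j → j < k → D.sig i j k = σ i j k

/-- A drawing is pseudolinear if its edges extend to continuous curves over all of `ℝ`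
that avoid all vertices other than their endpoints and such that any two of these
extended curves cross exactly once (the crossing being a sign change of the difference). -/
def Pseudolinear (D : XMonotoneDrawing n) : Prop :=
  ∃ p : Fin n → Fin n → ℝ → ℝ,
    (∀ i j : Fin n, i < j → Continuous (p i j)) ∧
    (∀ i j : Fin n, i < j → ∀ t ∈ Set.Icc (D.x i) (D.x j), p i j t = D.e i j t) ∧
    (∀ i j m : Fin n, i < j → m ≠ i → m ≠ j → p i j (D.x m) ≠ 0) ∧
    (∀ i j k l : Fin n, i < j → k < l → (i, j) ≠ (k, l) →
      ∃ t : ℝ, p i j t = p k l t ∧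
        ∀ s u : ℝ, s < t → t < u →
          (p i j s - p k l s) * (p i j u - p k l u) < 0)

/-- The arc of the edge `{i, j}` as a subset of the plane `ℝ × ℝ`. -/
def edgeArc (D : XMonotoneDrawing n) (i j : Fin n) : Set (ℝ × ℝ) :=
  {q : ℝ × ℝ | D.x i ≤ q.1 ∧ q.1 ≤ D.x j ∧ q.2 = D.e i j q.1}

/-- The union of all edge arcs of the drawing. -/
def arcUnion (D : XMonotoneDrawing n) : Set (ℝ × ℝ) :=
  ⋃ i : Fin n, ⋃ j : Fin n, ⋃ (_ : i < j), D.edgeArc i j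

end XMonotoneDrawing

namespace Sig

variable {n : ℕ}

/-- With respect to a signature function `σ`, the vertex `m ∉ {i, j}` is on the left of
the directed edge `(i, j)` (where `i < j`). -/
def LeftOf (σ : Fin n → Fin n → Fin n → Bool) (i j m : Fin n) : Prop :=
  (i < m ∧ m < j ∧ σ i m j = false) ∨ (m < i ∧ σ m i j = true) ∨ (j < m ∧ σ i j m = true)

/-- The number of vertices on the left of the directed edge `(i, j)`. -/
noncomputable def leftCount (σ : Fin n → Fin n → Fin n → Bool) (i j : Fin n) : ℕ :=
  {m : Fin n | LeftOf σ i j m}.ncard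

/-- The edge `{i, j}` (with `i < j`) is a `k`-edge of `σ` if `min(ℓ, n − 2 − ℓ) = k`,
where `ℓ` is the number of vertices on its left. -/
def IsKEdge (σ : Fin n → Fin n → Fin n → Bool) (k : ℕ) (i j : Fin n) : Prop :=
  min (leftCount σ i j) (n - 2 - leftCount σ i j) = k

/-- `Ek σ k`: the number of `k`-edges of `σ`. -/
noncomputable def Ek (σ : Fin n → Fin n → Fin n → Bool) (k : ℕ) : ℕ :=
  {p : Fin n × Fin n | p.1 < p.2 ∧ IsKEdge σ k p.1 p.2}.ncard

/-- `Ele σ k = E_{≤k}(σ)`: the number of `≤k`-edges of `σ`. -/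
noncomputable def Ele (σ : Fin n → Fin n → Fin n → Bool) (k : ℕ) : ℕ :=
  ∑ i ∈ Finset.range (k + 1), Ek σ i

/-- `Elele σ k = E_{≤≤k}(σ) = Σ_{j=0}^{k} E_{≤j}(σ)`. -/
noncomputable def Elele (σ : Fin n → Fin n → Fin n → Bool) (k : ℕ) : ℕ :=
  ∑ j ∈ Finset.range (k + 1), Ele σ j

/-- `E_{≤≤k}` with an integer index, which vanishes for negative `k`. -/
noncomputable def ElelZ (σ : Fin n → Fin n → Fin n → Bool) (k : ℤ) : ℕ :=
  if 0 ≤ k then Elele σ k.toNat else 0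

/-- The left count of the edge `{i, j}` in the drawing restricted to the first
`n − 1` vertices (the last vertex deleted). -/
noncomputable def leftCountRes (σ : Fin n → Fin n → Fin n → Bool) (i j : Fin n) : ℕ :=
  {m : Fin n | LeftOf σ i j m ∧ (m : ℕ) + 1 < n}.ncard

/-- The edge `{i, j}` is a `k`-edge of the restriction of `σ` to the first `n − 1`
vertices (there `min(ℓ', (n−1) − 2 − ℓ') = k`). -/
def IsKEdgeRes (σ : Fin n → Fin n → Fin n → Bool) (k : ℕ) (i j : Fin n) : Prop :=
  min (leftCountRes σ i j) (n - 3 - leftCountRes σ i j) = k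

/-- The edge `{i, j}` is a `(D,D')`-invariant `≤k`-edge: it avoids the last vertex and
is an `m`-edge with `m ≤ k` both in `σ` and in the restriction of `σ` to the first
`n − 1` vertices. -/
def InvariantLeK (σ : Fin n → Fin n → Fin n → Bool) (k : ℕ) (i j : Fin n) : Prop :=
  (j : ℕ) + 1 < n ∧ (∃ m ≤ k, IsKEdge σ m i j) ∧ (∃ m ≤ k, IsKEdgeRes σ m i j)

/-- The ten 4-tuple forms allowed in signature functions of semisimple x-monotone
drawings: `++++, −−−−, ++−−, −−++, −++−, +−−+, −−−+, +++−, +−−−, −+++`. -/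
def AllowedForm (a b c d : Bool) : Prop :=
  (a, b, c, d) ∈ ([(true, true, true, true), (false, false, false, false),
    (true, true, false, false), (false, false, true, true),
    (false, true, true, false), (true, false, false, true),
    (false, false, false, true), (true, true, true, false),
    (true, false, false, false), (false, true, true, true)] :
      List (Bool × Bool × Bool × Bool))

/-- A signature function is admissible if every increasing 4-tuple is of one of the
ten allowed forms. -/
def Admissible (σ : Fin n → Fin n → Fin n → Bool) : Prop :=
  ∀ a b c d : Fin n, a < b → b < c → c < d →
    AllowedForm (σ a b c) (σ a b d) (σ a c d) (σ b c d)

/-- The six convex forms: `++++, −−−−, ++−−, −−++, −++−, +−−+`. -/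
def ConvexForm (a b c d : Bool) : Prop :=
  (a, b, c, d) ∈ ([(true, true, true, true), (false, false, false, false),
    (true, true, false, false), (false, false, true, true),
    (false, true, true, false), (true, false, false, true)] :
      List (Bool × Bool × Bool × Bool))

/-- The 4-tuple `a < b < c < d` is convex in `σ`. -/
def Convex4 (σ : Fin n → Fin n → Fin n → Bool) (a b c d : Fin n) : Prop :=
  ConvexForm (σ a b c) (σ a b d) (σ a c d) (σ b c d)

/-- The eight 4-tuple forms of pseudolinear x-monotone drawings (the sign-monotone
sequences): `++++, +++−, ++−−, +−−−, −−−−, −−−+, −−++, −+++`. -/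
def PLForm (a b c d : Bool) : Prop :=
  (a, b, c, d) ∈ ([(true, true, true, true), (true, true, true, false),
    (true, true, false, false), (true, false, false, false),
    (false, false, false, false), (false, false, false, true),
    (false, false, true, true), (false, true, true, true)] :
      List (Bool × Bool × Bool × Bool))

/-- The relation `j ⋖ k` on `{j : i < j}`: `j ⋖ k` iff (`j < k` and `σ i j k = +`)
or (`k < j` and `σ i k j = −`). -/
def Below (σ : Fin n → Fin n → Fin n → Bool) (i j k : Fin n) : Prop :=
  (j < k ∧ σ i j k = true) ∨ (k < j ∧ σ i k j = false)

end Sig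

open Finset in
/-- The elements of rank less than `a` with respect to an injective real weight number at
least `a`. -/
lemma Finset.le_card_filter_rank_lt {α : Type*} (S : Finset α) (f : α → ℝ)
    (hf : Set.InjOn f S) {a : ℕ} (ha : a ≤ #S) :
    a ≤ #{j ∈ S | #{m ∈ S | f m < f j} < a} := by
  classical
  have hmono : ∀ j ∈ S, ∀ l, f j < f l → #{m ∈ S | f m < f j} < #{m ∈ S | f m < f l} := by
    intro j hj l hjl
    refine card_lt_card ⟨fun m hm => ?_, fun h => ?_⟩
    · simp only [mem_filter] at hm ⊢
      exact ⟨hm.1, hm.2.trans hjl⟩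
    · simpa using h (mem_filter.2 ⟨hj, hjl⟩)
  have hinj : Set.InjOn (fun j => #{m ∈ S | f m < f j}) S := by
    intro j hj l hl h
    by_contra hne
    rcases lt_or_gt_of_ne (fun h' => hne (hf hj hl h')) with h' | h'
    · exact (hmono j hj l h').ne h
    · exact (hmono l hl j h').ne' h
  have himage : S.image (fun j => #{m ∈ S | f m < f j}) = range #S := by
    refine eq_of_subset_of_card_le (fun r hr => ?_) ?_
    · obtain ⟨j, hj, rfl⟩ := mem_image.1 hr
      refine mem_range.2 (card_lt_card ⟨filter_subset _ _, fun h => ?_⟩)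
      simpa using h hj
    · rw [card_image_of_injOn hinj, card_range]
  calc a = #(range a) := (card_range a).symm
    _ ≤ #(({j ∈ S | #{m ∈ S | f m < f j} < a}).image (fun j => #{m ∈ S | f m < f j})) := by
        refine card_le_card fun r hr => ?_
        have hr' : r ∈ range #S := mem_range.2 ((mem_range.1 hr).trans_le ha)
        rw [← himage] at hr'
        obtain ⟨j, hj, rfl⟩ := mem_image.1 hr'
        exact mem_image.2 ⟨j, mem_filter.2 ⟨hj, mem_range.1 hr⟩, rfl⟩
    _ ≤ _ := card_image_le

open Finset in
/-- With respect to an injective real weight, every element of `S` other than `j` has either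
smaller or larger weight than `j`. -/
lemma Finset.card_filter_lt_add_card_filter_gt {α : Type*} (S : Finset α) (f : α → ℝ)
    (hf : Set.InjOn f S) {j : α} (hj : j ∈ S) :
    #{m ∈ S | f m < f j} + #{m ∈ S | f j < f m} + 1 = #S := by
  classical
  rw [← card_union_of_disjoint
    (disjoint_filter.2 fun m _ h h' => lt_asymm h h'), ← card_erase_add_one hj]
  congr 2
  ext m
  simp only [mem_union, mem_filter, mem_erase]
  constructor
  · rintro (⟨h, h'⟩ | ⟨h, h'⟩)
    · exact ⟨fun e => h'.ne (e ▸ rfl), h⟩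
    · exact ⟨fun e => h'.ne (e ▸ rfl), h⟩
  · rintro ⟨hne, h⟩
    rcases lt_or_gt_of_ne (fun e => hne (hf h hj e)) with h' | h'
    · exact Or.inl ⟨h, h'⟩
    · exact Or.inr ⟨h, h'⟩

namespace XMonotoneDrawing

variable {n : ℕ} {D : XMonotoneDrawing n}

/-- In a semisimple drawing, two edges with a common left endpoint do not meet over the
interior of their common domain. -/
lemma Semisimple.edge_ne (hD : D.Semisimple) {i j k : Fin n} (hij : i < j) (hik : i < k)
    (hjk : j ≠ k) {t : ℝ} (ht : D.x i < t) (htj : t < D.x j) (htk : t < D.x k) :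
    D.e i j t ≠ D.e i k t := by
  intro h
  have hne : (i, j) ≠ (i, k) := fun e => hjk (Prod.ext_iff.1 e).2
  have h0 := (Set.ncard_eq_zero (D.cross_finite i j i k hij hik hne)).1
    (hD i j i k hij hik hne (Or.inl rfl))
  have hmem : t ∈ (∅ : Set ℝ) := h0 ▸ ⟨by simpa using ht, lt_min htj htk, h⟩
  exact hmem

/-- The sign of `(i, j, k)` records which of the edges `{i, j}` and `{i, k}` is lower. -/
lemma Semisimple.sig_eq_true_iff (hD : D.Semisimple) {i j k : Fin n} (hij : i < j)
    (hjk : j < k) {t : ℝ} (ht : D.x i < t) (htj : t < D.x j) :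
    D.sig i j k = true ↔ D.e i j t < D.e i k t := by
  have hxjk := D.x_strictMono hjk
  have hne : ∀ s ∈ Set.Icc t (D.x j), D.e i k s - D.e i j s ≠ 0 := by
    intro s hs
    rcases hs.2.lt_or_eq with h | rfl
    · exact sub_ne_zero.2
        (hD.edge_ne hij (hij.trans hjk) hjk.ne (ht.trans_le hs.1) h (h.trans hxjk)).symm
    · rw [D.end_right i j hij, sub_zero]
      exact D.avoid_vertex i j k hij hjk
  have hcont : ContinuousOn (fun s => D.e i k s - D.e i j s) (Set.Icc t (D.x j)) :=
    ((D.cont i k (hij.trans hjk)).mono (Set.Icc_subset_Icc ht.le hxjk.le)).sub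
      ((D.cont i j hij).mono (Set.Icc_subset_Icc_left ht.le))
  have hsig : D.sig i j k = true ↔ 0 < D.e i k (D.x j) - D.e i j (D.x j) := by
    simp [sig, D.end_right i j hij]
  rw [hsig, ← sub_pos (a := D.e i k t)]
  constructor
  · intro h
    by_contra h'
    obtain ⟨s, hs, hs0⟩ := intermediate_value_Icc htj.le hcont ⟨not_lt.1 h', h.le⟩
    exact hne s hs hs0
  · intro h
    by_contra h'
    obtain ⟨s, hs, hs0⟩ := intermediate_value_Icc' htj.le hcont ⟨not_lt.1 h', h.le⟩
    exact hne s hs hs0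

/-- A vertex `m` to the right of `v i` is on the left of `(i, j)` exactly when the edge
`{i, m}` starts above the edge `{i, j}`. -/
lemma Semisimple.leftOf_iff (hD : D.Semisimple) {i j m : Fin n} (hij : i < j) (him : i < m)
    {t : ℝ} (ht : D.x i < t) (htj : t < D.x j) (htm : t < D.x m) :
    Sig.LeftOf D.sig i j m ↔ D.e i j t < D.e i m t := by
  rcases lt_trichotomy m j with h | rfl | h
  · have h1 := hD.sig_eq_true_iff him h ht htm
    have h2 := hD.edge_ne hij him h.ne' ht htj htm
    simp only [Sig.LeftOf, him, h, him.not_gt, h.not_gt, true_and, false_and, or_false]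
    rw [← Bool.not_eq_true, h1, not_lt]
    exact ⟨fun h' => h'.lt_of_ne h2, le_of_lt⟩
  · simp [Sig.LeftOf, him.not_gt]
  · simp [Sig.LeftOf, h, him.not_gt, h.not_gt, hD.sig_eq_true_iff hij h ht htj]

end XMonotoneDrawing

namespace Sig

variable {n : ℕ}

/-- A `≤k`-edge avoiding the last vertex remains a `≤k`-edge when the last vertex is
deleted. -/
lemma invariantLeK_of_leftCount {σ : Fin n → Fin n → Fin n → Bool} {k : ℕ} {i j : Fin n}
    (hj : (j : ℕ) + 1 < n) (h : leftCount σ i j ≤ k ∨ n - 2 - leftCount σ i j ≤ k) :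
    InvariantLeK σ k i j := by
  have h1 : leftCountRes σ i j ≤ leftCount σ i j :=
    Set.ncard_le_ncard (fun m hm => hm.1) (Set.toFinite _)
  have h2 : leftCount σ i j ≤ leftCountRes σ i j + 1 := by
    refine (Set.ncard_le_ncard (t := insert (⟨n - 1, by omega⟩ : Fin n)
      {m : Fin n | LeftOf σ i j m ∧ (m : ℕ) + 1 < n}) (fun m hm => ?_)
      (Set.toFinite _)).trans (Set.ncard_insert_le _ _)
    rcases lt_or_ge ((m : ℕ) + 1) n with h | h
    · exact Or.inr ⟨hm, h⟩
    · exact Or.inl (Fin.ext (by have := m.2; simp only; omega))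
  exact ⟨hj, ⟨_, by omega, rfl⟩, ⟨_, by omega, rfl⟩⟩

end Sig

open Finset in
/-- The vertex `v i` is the left endpoint of at least `k + 1 - i` invariant `≤k`-edges
(vertices being numbered from `0`). -/
lemma XMonotoneDrawing.Semisimple.exists_invariantLeK {n : ℕ} {D : XMonotoneDrawing n}
    (hD : D.Semisimple) {k : ℕ} (hk : 2 * k + 3 ≤ n) (i : Fin n) (hi : (i : ℕ) ≤ k) :
    ∃ T : Finset (Fin n), k + 1 - i ≤ #T ∧
      ∀ j ∈ T, i < j ∧ Sig.InvariantLeK D.sig k i j := by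
  classical
  obtain ⟨t, ht, htS⟩ : ∃ t, D.x i < t ∧ ∀ j, i < j → t < D.x j := by
    have hlt : i < ⟨i + 1, by omega⟩ := Fin.lt_def.2 (Nat.lt_succ_self _)
    obtain ⟨t, ht, ht'⟩ := exists_between (D.x_strictMono hlt)
    refine ⟨t, ht, fun j hj => ht'.trans_le (D.x_strictMono.monotone ?_)⟩
    exact Fin.le_def.2 (Nat.succ_le_of_lt hj)
  set f : Fin n → ℝ := fun j => D.e i j t
  have hf : Set.InjOn f (Ioi i : Finset (Fin n)) := by
    intro j hj l hl h
    simp only [coe_Ioi, Set.mem_Ioi] at hj hl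
    by_contra hne
    exact hD.edge_ne hj hl hne ht (htS j hj) (htS l hl) h
  have hcard : #(Ioi i) = n - 1 - i := by simp
  have hsplit : ∀ j, i < j → #{m ∈ Ioi i | f m < f j} + #{m ∈ Ioi i | f j < f m} + 1 = #(Ioi i) :=
    fun j hj => card_filter_lt_add_card_filter_gt _ f hf (mem_Ioi.2 hj)
  have hlower : ∀ j, i < j → #{m ∈ Ioi i | f j < f m} ≤ Sig.leftCount D.sig i j := by
    intro j hj
    rw [← Set.ncard_coe_finset]
    refine Set.ncard_le_ncard (fun m hm => ?_) (Set.toFinite _)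
    simp only [coe_filter, mem_Ioi, Set.mem_ofPred_eq] at hm
    exact (hD.leftOf_iff hj hm.1 ht (htS j hj) (htS m hm.1)).2 hm.2
  have hupper : ∀ j, i < j → Sig.leftCount D.sig i j ≤ i + #{m ∈ Ioi i | f j < f m} := by
    intro j hj
    calc Sig.leftCount D.sig i j
        ≤ (↑(Iio i ∪ {m ∈ Ioi i | f j < f m}) : Set (Fin n)).ncard := by
          refine Set.ncard_le_ncard (fun m hm => ?_) (Set.toFinite _)
          simp only [coe_union, coe_Iio, coe_filter, mem_Ioi, Set.mem_union, Set.mem_Iio,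
            Set.mem_ofPred_eq]
          rcases lt_trichotomy m i with h | rfl | h
          · exact Or.inl h
          · simp [Sig.LeftOf, hj.not_gt] at hm
          · exact Or.inr ⟨h, (hD.leftOf_iff hj h ht (htS j hj) (htS m h)).1 hm⟩
      _ ≤ i + #{m ∈ Ioi i | f j < f m} := by
          rw [Set.ncard_coe_finset]
          exact (card_union_le _ _).trans (by simp)
  have hend : ∀ j : Fin n, j ≠ ⟨n - 1, by omega⟩ → (j : ℕ) + 1 < n := by
    intro j hj
    have := j.2
    have : (j : ℕ) ≠ n - 1 := fun h => hj (Fin.ext h)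
    omega
  set a := k + 1 - (i : ℕ) with ha
  by_cases hlast : (⟨n - 1, by omega⟩ : Fin n) ∈ {j ∈ Ioi i | #{m ∈ Ioi i | f m < f j} < a}
  · refine ⟨{j ∈ Ioi i | #{m ∈ Ioi i | f j < f m} < a}, ?_, fun j hj => ?_⟩
    · simpa using le_card_filter_rank_lt (Ioi i) (fun j => - f j)
        (fun j hj l hl h => hf hj hl (neg_injective h)) (a := a) (by omega)
    · simp only [mem_filter, mem_Ioi] at hj hlast
      refine ⟨hj.1, Sig.invariantLeK_of_leftCount (hend j ?_) (Or.inl ?_)⟩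
      · rintro rfl
        have := hsplit _ hj.1
        omega
      · have := hupper j hj.1
        omega
  · refine ⟨{j ∈ Ioi i | #{m ∈ Ioi i | f m < f j} < a},
      le_card_filter_rank_lt _ f hf (by omega), fun j hj => ?_⟩
    have hne : j ≠ ⟨n - 1, by omega⟩ := fun h => hlast (h ▸ hj)
    simp only [mem_filter, mem_Ioi] at hj
    refine ⟨hj.1, Sig.invariantLeK_of_leftCount (hend j hne) (Or.inr ?_)⟩
    have := hsplit j hj.1
    have := hlower j hj.1
    omega

lemma Finset.sum_range_succ_sub_eq_choose (k : ℕ) :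
    ∑ i ∈ Finset.range (k + 1), (k + 1 - i) = (k + 2).choose 2 := by
  induction k with
  | zero => rfl
  | succ k ih =>
    rw [Finset.sum_range_succ', Nat.choose_succ_succ' (k + 2) 1, ← ih, Nat.choose_one_right]
    simp only [Nat.add_sub_add_right, Nat.sub_zero]
    omega

/-- Let `D` be a semisimple x-monotone drawing of `K n`, let
`0 ≤ k ≤ (n−3)/2` (i.e. `2k + 3 ≤ n`), and let `D'` be obtained from `D` by deleting the
last vertex. Then the number of `(D,D')`-invariant `≤k`-edges is at least
`Σ_{i=1}^{k+1} (k+2−i) = C(k+2, 2)`. -/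
theorem invariant_le_k_edges_lower_bound (n : ℕ) (D : XMonotoneDrawing n)
    (hD : D.Semisimple) (k : ℕ) (hk : 2 * k + 3 ≤ n) :
    (∑ i ∈ Finset.Icc 1 (k + 1), (k + 2 - i)) = (k + 2).choose 2 ∧
    (k + 2).choose 2 ≤
      {p : Fin n × Fin n | p.1 < p.2 ∧ Sig.InvariantLeK D.sig k p.1 p.2}.ncard := by
  classical
  refine ⟨?_, ?_⟩
  · rw [← Finset.sum_range_succ_sub_eq_choose, Finset.range_eq_Ico]
    exact (Finset.sum_Ico_add' (fun i => k + 2 - i) 0 (k + 1) 1).symm.trans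
      (Finset.sum_congr rfl fun i _ => by omega)
  · have hkn : k + 1 ≤ n := by omega
    choose T hTcard hT using fun i : Fin (k + 1) =>
      hD.exists_invariantLeK hk (Fin.castLE hkn i) (Nat.lt_succ_iff.1 i.2)
    calc (k + 2).choose 2 = ∑ i : Fin (k + 1), (k + 1 - (i : ℕ)) := by
          rw [← Finset.sum_range_succ_sub_eq_choose, Finset.sum_range]
      _ ≤ ∑ i : Fin (k + 1), (T i).card := Finset.sum_le_sum fun i _ => hTcard i
      _ = (Finset.univ.sigma T).card := (Finset.card_sigma _ _).symm
      _ = ((Finset.univ.sigma T).image fun q => (Fin.castLE hkn q.1, q.2)).card := by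
          refine (Finset.card_image_of_injective _ ?_).symm
          rintro ⟨i, j⟩ ⟨i', j'⟩ h
          obtain ⟨h1, rfl⟩ := Prod.ext_iff.1 h
          obtain rfl := Fin.castLE_injective hkn h1
          rfl
      _ ≤ _ := by
          rw [← Set.ncard_coe_finset]
          refine Set.ncard_le_ncard (fun p hp => ?_) (Set.toFinite _)
          simp only [Finset.coe_image, Set.mem_image, Finset.mem_coe, Finset.mem_sigma] at hp
          obtain ⟨q, hq, rfl⟩ := hp
          exact hT q.1 q.2 hq.2
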